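/- arXiv:1111.0650 — 2 statements merged into one kernel-verified Lean document; each statement's English description precedes it below -/
import Mathlib

section
/- Let σ be a primitive substitution on a d-letter alphabet, prolongable on the letter a, with non-periodic fixed point x = σ^ω(a). Then for every nonempty prefix u of x, the return substitution σ_u satisfies |σ_u| ≤ |σ|·K_σ². -/
/-!
Write `l = |σ|`, `R = R_σ`, `Q = Q_σ`. The length of `σ_u` on a letter is the number of return
words to `u` in `σ(w)`, for a return word `w`. It is bounded by an upper bound on `|σ(w)|`
divided by a lower bound on the lengths of return words to `u`; both are proportional to `|u|`.

* Lower bound (`periodic_of_prefix`, `length_lt_of_occ`). If a prefix `u` occurs at two positions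
  at distance `g`, it has period `g`. When `|u| ≥ (1 + l) g`, applying `σ` shows that a strictly
  longer prefix of `x` has the period `h = |σ(x_[0,g))|`, and the overlap of length `g + h`
  transfers the period `g` to this longer prefix. Inductively `x` would be periodic. Hence return
  words to `u` have length more than `|u| / (1 + l)`.

* Upper bound (`occSeq_succ_le`). If `m` is minimal with `|u| ≤ |σᵐ(a)|`, then `u` is a prefix of
  `σᵐ(a)`, and every window of `R` letters of `x` contains an `a` (`exists_letter_in_window`), so
  return words to `u` have length at most `R |σᵐ| ≤ R l |σ^(m-1)|`. Finally
  `|σⁿ| ≤ (4/3) Q R |σⁿ(a)|` for every `n` (`mSize_substIter_le`): the definition of `Q` bounds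
  `|σᵏ| / |σᵏ(a)|` for small `k`, and at a suitable small level `k` every letter fills a
  proportion at least `3 / (4 R)` of `σᵏ(a)` (`exists_level_frequency`), so that
  `|σⁿ(a)| = |σ^(n-k)(σᵏ(a))|` is comparable with `|σ^(n-k)| |σᵏ(a)|`.

Altogether `|σ_u| ≤ (1 + l) * l * (4/3) * l * Q * R ^ 2`, and `(4/3) (1 + l) ≤ l Q` because
`2 ≤ l ≤ Q`.
-/

namespace Rauzy

variable {A B Γ : Type*}

/-- The factor `x_[i, i+n)` of length `n` of the sequence `x`, starting at position `i`. -/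
def factorAt (x : ℕ → A) (i n : ℕ) : List A :=
  (List.range n).map fun k => x (i + k)

/-- The word `w` occurs in the sequence `x` at position `i`. -/
def OccursAt (x : ℕ → A) (w : List A) (i : ℕ) : Prop :=
  factorAt x i w.length = w

/-- The word `w` is a factor of the sequence `x`. -/
def IsFactor (x : ℕ → A) (w : List A) : Prop :=
  ∃ i, OccursAt x w i

/-- The word `w` is a prefix of the sequence `x`. -/
def IsPrefixSeq (x : ℕ → A) (w : List A) : Prop :=
  OccursAt x w 0

/-- The sequence `x` is uniformly recurrent: every factor occurs with bounded gaps. -/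
def UniformlyRecurrent (x : ℕ → A) : Prop :=
  ∀ w : List A, IsFactor x w → ∃ N, ∀ i, ∃ j, i ≤ j ∧ j < i + N ∧ OccursAt x w j

/-- `i < j` are two successive occurrences of `u` in `x`. -/
def SuccessiveOccs (x : ℕ → A) (u : List A) (i j : ℕ) : Prop :=
  i < j ∧ OccursAt x u i ∧ OccursAt x u j ∧ ∀ k, i < k → k < j → ¬ OccursAt x u k

/-- The word `w` is a return word to `u` in `x`. -/
def IsReturnWord (x : ℕ → A) (u w : List A) : Prop :=
  ∃ i j, SuccessiveOccs x u i j ∧ w = factorAt x i (j - i)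

/-- The set `ℛ_{x,u}` of return words to `u` in `x`. -/
def returnWords (x : ℕ → A) (u : List A) : Set (List A) :=
  {w | IsReturnWord x u w}

/-- The next occurrence of `u` in `x` strictly after position `i`. -/
noncomputable def nextOcc (x : ℕ → A) (u : List A) (i : ℕ) : ℕ :=
  sInf {j | i < j ∧ OccursAt x u j}

/-- The increasing enumeration of the occurrences of the prefix `u` in `x`
(position `0` is an occurrence since `u` is a prefix). -/
noncomputable def occSeq (x : ℕ → A) (u : List A) : ℕ → ℕ
  | 0 => 0
  | n + 1 => nextOcc x u (occSeq x u n)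

/-- The `n`-th return word `mₙ` in the decomposition `x = m₀m₁m₂⋯` of `x`
into return words to the prefix `u`. -/
noncomputable def retWord (x : ℕ → A) (u : List A) (n : ℕ) : List A :=
  factorAt x (occSeq x u n) (occSeq x u (n + 1) - occSeq x u n)

/-- The first index `n` such that `mₙ = w` in the decomposition of `x` into
return words to `u`. -/
noncomputable def firstIdx (x : ℕ → A) (u w : List A) : ℕ :=
  sInf {n | retWord x u n = w}

open Classical in
/-- The derived sequence `D_u(x)` of `x` on the prefix `u`, with the return words
labelled `0, 1, 2, …` in the order of their first appearance in the decomposition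
`x = m₀m₁m₂⋯` : the label of `mₙ` is the number of distinct return words appearing
strictly before the first occurrence of `mₙ`. -/
noncomputable def derivedSeq (x : ℕ → A) (u : List A) (n : ℕ) : ℕ :=
  ((Finset.range (firstIdx x u (retWord x u n))).image (retWord x u)).card

/-- The alphabet `R_{x,u} = {0, …, #ℛ_{x,u} - 1} ⊆ ℕ` of the derived sequence. -/
def derivedAlphabet (x : ℕ → A) (u : List A) : Set ℕ :=
  Set.range (derivedSeq x u)

/-- The morphism `Θ_{x,u}` on letters: the return word labelled `k`. -/
noncomputable def thetaLetter (x : ℕ → A) (u : List A) (k : ℕ) : List A :=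
  retWord x u (sInf {n | derivedSeq x u n = k})

/-- The canonical extension of a letter-to-word map to a monoid morphism on words. -/
def apply (f : A → List B) (w : List A) : List B :=
  (w.map f).flatten

/-- The morphism `Θ_{x,u} : R_{x,u}* → A*` on words. -/
noncomputable def theta (x : ℕ → A) (u : List A) (l : List ℕ) : List A :=
  apply (thetaLetter x u) l

/-- `y = f(x)` for an infinite sequence `x`: the image under `f` of every prefix
of `x` is a prefix of `y`. -/
def SeqImage (f : A → List B) (x : ℕ → A) (y : ℕ → B) : Prop :=
  ∀ n, IsPrefixSeq y (apply f (factorAt x 0 n))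

/-- The iterate `σⁿ` of a substitution, on letters. -/
def substIter (σ : A → List A) : ℕ → A → List A
  | 0 => fun a => [a]
  | n + 1 => fun a => apply σ (substIter σ n a)

/-- `σ` is prolongable on the letter `a`: `σ(a) = a·w` with `w` nonempty, and
`|σⁿ(a)| → ∞`. -/
def Prolongable (σ : A → List A) (a : A) : Prop :=
  (∃ w : List A, w ≠ [] ∧ σ a = a :: w) ∧
    Filter.Tendsto (fun n => (substIter σ n a).length) Filter.atTop Filter.atTop

/-- The incidence matrix of a substitution: entry `(i, j)` is the number of
occurrences of the letter `i` in `σ(j)`. -/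
def incMatrix [Fintype A] [DecidableEq A] (σ : A → List A) : Matrix A A ℕ :=
  Matrix.of fun i j => (σ j).count i

/-- A substitution is primitive if some power of its incidence matrix has all
entries strictly positive. -/
def Primitive [Fintype A] [DecidableEq A] (σ : A → List A) : Prop :=
  ∃ k, 0 < k ∧ ∀ i j, 0 < (incMatrix σ ^ k) i j

/-- The sequence `x` is (purely) periodic. -/
def IsPeriodic (x : ℕ → A) : Prop :=
  ∃ p, 0 < p ∧ ∀ n, x (n + p) = x n

/-- The sequence `x` is ultimately periodic. -/
def IsUltimatelyPeriodic (x : ℕ → A) : Prop :=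
  ∃ N p, 0 < p ∧ ∀ n, N ≤ n → x (n + p) = x n

/-- `|σ| = max_{a ∈ A} |σ(a)|`. -/
def mSize [Fintype A] (σ : A → List A) : ℕ :=
  Finset.univ.sup fun a => (σ a).length

/-- `min_{a ∈ A} |σ(a)|`. -/
noncomputable def minSize [Fintype A] [Nonempty A] (σ : A → List A) : ℕ :=
  Finset.univ.inf' Finset.univ_nonempty fun a => (σ a).length

/-- `R_σ`: the maximal difference between two successive occurrences of a word of
length 2 in any fixed point of `σ`. -/
noncomputable def Rconst (σ : A → List A) : ℕ :=
  sSup {r | ∃ x : ℕ → A, SeqImage σ x x ∧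
    ∃ w i j, w.length = 2 ∧ SuccessiveOccs x w i j ∧ r = j - i}

/-- `Q_σ = max( max_{0 ≤ n ≤ (d−1)d^d + 1} |σⁿ| / min_{a∈A} |σⁿ(a)| , |σ| )`. -/
noncomputable def Qconst [Fintype A] [Nonempty A] (σ : A → List A) : ℝ :=
  max
    ((Finset.range ((Fintype.card A - 1) * Fintype.card A ^ Fintype.card A + 2)).sup'
      (Finset.nonempty_range_iff.mpr (by omega))
      fun n => (mSize (substIter σ n) : ℝ) / (minSize (substIter σ n) : ℝ))
    (mSize σ : ℝ)

/-- `K_σ = Q_σ · R_σ · |σ|`. -/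
noncomputable def Kconst [Fintype A] [Nonempty A] (σ : A → List A) : ℝ :=
  Qconst σ * Rconst σ * mSize σ

/-- The index `m` such that `occSeq x u m = L`, i.e. the number of complete return
words to `u` composing the prefix of length `L` of `x`. -/
noncomputable def posIdx (x : ℕ → A) (u : List A) (L : ℕ) : ℕ :=
  sInf {m | occSeq x u m = L}

/-- The return substitution `σ_u : R_{x,u}* → R_{x,u}*`, on letters: it is the unique
substitution satisfying `Θ_{x,u} ∘ σ_u = σ ∘ Θ_{x,u}`. -/
noncomputable def returnSubst (σ : A → List A) (x : ℕ → A) (u : List A) (k : ℕ) : List ℕ :=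
  let n := sInf {n | derivedSeq x u n = k}
  let p := posIdx x u (apply σ (factorAt x 0 (occSeq x u n))).length
  let q := posIdx x u (apply σ (factorAt x 0 (occSeq x u (n + 1)))).length
  (List.range (q - p)).map fun t => derivedSeq x u (p + t)

/-- For a coding `φ`, the morphism `λ_u : R_{x,u}* → R_{φ(x),φ(u)}*`, on letters:
it is the unique morphism satisfying `φ ∘ Θ_{x,u} = Θ_{φ(x),φ(u)} ∘ λ_u`. -/
noncomputable def lambdaMorph (φ : A → B) (x : ℕ → A) (u : List A) (k : ℕ) : List ℕ :=
  let n := sInf {n | derivedSeq x u n = k}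
  let p := posIdx (fun i => φ (x i)) (u.map φ) (occSeq x u n)
  let q := posIdx (fun i => φ (x i)) (u.map φ) (occSeq x u (n + 1))
  (List.range (q - p)).map fun t => derivedSeq (fun i => φ (x i)) (u.map φ) (p + t)

/-- The Parikh vector (abelianization) of a word. -/
def parikh [DecidableEq A] (w : List A) : A → ℤ :=
  fun b => (w.count b : ℤ)


/-! ### Factors, occurrences and images of words -/

theorem length_factorAt (x : ℕ → A) (i n : ℕ) : (factorAt x i n).length = n := by
  simp [factorAt]

theorem factorAt_add (x : ℕ → A) (i m n : ℕ) :
    factorAt x i (m + n) = factorAt x i m ++ factorAt x (i + m) n := by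
  simp [factorAt, List.range_add, Function.comp_def, add_assoc]

theorem factorAt_succ (x : ℕ → A) (i n : ℕ) :
    factorAt x i (n + 1) = factorAt x i n ++ [x (i + n)] := by
  rw [factorAt_add]; simp [factorAt]

theorem factorAt_one (x : ℕ → A) (i : ℕ) : factorAt x i 1 = [x i] := by
  simp [factorAt]

theorem factorAt_congr {x y : ℕ → A} {i j n : ℕ} (h : ∀ k < n, x (i + k) = y (j + k)) :
    factorAt x i n = factorAt y j n := by
  unfold factorAt
  apply List.map_congr_left
  intro k hk
  exact h k (List.mem_range.mp hk)

theorem factorAt_eq_iff {x y : ℕ → A} {i j n : ℕ} :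
    factorAt x i n = factorAt y j n ↔ ∀ k < n, x (i + k) = y (j + k) := by
  refine ⟨fun h k hk => ?_, factorAt_congr⟩
  have h1 := congrArg (fun l => l[k]?) h
  simpa [factorAt, hk] using h1

theorem occursAt_append {x : ℕ → A} {v w : List A} {i : ℕ} :
    OccursAt x (v ++ w) i ↔ OccursAt x v i ∧ OccursAt x w (i + v.length) := by
  unfold OccursAt
  rw [List.length_append, factorAt_add]
  constructor
  · intro h
    exact List.append_inj h (length_factorAt _ _ _)
  · rintro ⟨h1, h2⟩
    rw [h1, h2]

theorem occursAt_factorAt (x : ℕ → A) (i n : ℕ) : OccursAt x (factorAt x i n) i := by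
  unfold OccursAt; rw [length_factorAt]

theorem occursAt_iff_of_prefix {x : ℕ → A} {u : List A} (hu : IsPrefixSeq x u) {i : ℕ} :
    OccursAt x u i ↔ ∀ k < u.length, x (i + k) = x k := by
  have hu' : factorAt x 0 u.length = u := hu
  constructor
  · intro h
    have h' : factorAt x i u.length = u := h
    have := factorAt_eq_iff.mp (h'.trans hu'.symm)
    simpa using this
  · intro h
    refine Eq.trans (factorAt_congr (y := x) (j := 0) ?_) hu'
    simpa using h

theorem occursAt_of_infix {x : ℕ → A} {w v : List A} {p : ℕ} (h : w <:+: v)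
    (hv : OccursAt x v p) :
    ∃ q, p ≤ q ∧ q + w.length ≤ p + v.length ∧ OccursAt x w q := by
  obtain ⟨l, r, rfl⟩ := h
  rw [occursAt_append, occursAt_append] at hv
  refine ⟨p + l.length, by omega, ?_, hv.1.2⟩
  simp only [List.length_append]; omega

theorem infix_of_occursAt {x : ℕ → A} {w v : List A} {i : ℕ} (hv : IsPrefixSeq x v)
    (hw : OccursAt x w i) (hl : i + w.length ≤ v.length) : w <:+: v := by
  obtain ⟨r, hr⟩ := Nat.exists_eq_add_of_le hl
  have hv' : factorAt x 0 v.length = v := hv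
  rw [hr, factorAt_add, factorAt_add] at hv'
  have hw' : factorAt x (0 + i) w.length = w := by rw [zero_add]; exact hw
  rw [hw'] at hv'
  exact ⟨_, _, hv'⟩

theorem occursAt_singleton {x : ℕ → A} {c : A} {i : ℕ} : OccursAt x [c] i ↔ x i = c := by
  simp [OccursAt, factorAt]

theorem apply_nil (f : A → List B) : apply f [] = [] := rfl

theorem apply_cons (f : A → List B) (b : A) (w : List A) :
    apply f (b :: w) = f b ++ apply f w := by simp [apply]

theorem apply_append (f : A → List B) (v w : List A) :
    apply f (v ++ w) = apply f v ++ apply f w := by simp [apply]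

theorem apply_singleton (f : A → List B) (b : A) : apply f [b] = f b := by simp [apply]

theorem apply_infix (f : A → List B) {v w : List A} (h : v <:+: w) :
    apply f v <:+: apply f w := by
  obtain ⟨l, r, rfl⟩ := h
  exact ⟨apply f l, apply f r, by simp only [apply_append]⟩

theorem infix_apply_of_mem (f : A → List B) {b : A} {w : List A} (h : b ∈ w) :
    f b <:+: apply f w := by
  have : [b] <:+: w := by
    obtain ⟨l, r, rfl⟩ := List.append_of_mem h
    exact ⟨l, r, by simp⟩
  simpa [apply_singleton] using apply_infix f this

theorem mem_apply {f : A → List B} {w : List A} {c : B} :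
    c ∈ apply f w ↔ ∃ b ∈ w, c ∈ f b := by
  simp [apply]

theorem length_apply_le [Fintype A] (f : A → List A) (w : List A) :
    (apply f w).length ≤ mSize f * w.length := by
  induction w with
  | nil => simp [apply]
  | cons b w ih =>
    rw [apply_cons, List.length_append, List.length_cons]
    have : (f b).length ≤ mSize f :=
      Finset.le_sup (f := fun a => (f a).length) (Finset.mem_univ b)
    nlinarith

theorem le_mSize [Fintype A] (f : A → List A) (b : A) : (f b).length ≤ mSize f :=
  Finset.le_sup (f := fun a => (f a).length) (Finset.mem_univ b)

theorem mul_length_le_length_apply {f : A → List B} {r : ℕ} (h : ∀ b, r ≤ (f b).length)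
    (w : List A) : r * w.length ≤ (apply f w).length := by
  induction w with
  | nil => simp
  | cons b w ih =>
    rw [apply_cons, List.length_append, List.length_cons]
    have := h b
    nlinarith

theorem count_mul_le_length_apply [DecidableEq A] (f : A → List B) (c : A) (w : List A) :
    w.count c * (f c).length ≤ (apply f w).length := by
  induction w with
  | nil => simp
  | cons b w ih =>
    rw [apply_cons, List.length_append, List.count_cons]
    by_cases h : b = c
    · subst h; simp; nlinarith
    · simp [h]; omega

theorem count_apply [Fintype A] [DecidableEq A] [DecidableEq B] (f : A → List B) (i : B)
    (w : List A) : (apply f w).count i = ∑ l, (f l).count i * w.count l := by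
  induction w with
  | nil => simp [apply]
  | cons b w ih =>
    rw [apply_cons, List.count_append, ih]
    simp [List.count_cons, mul_add, Finset.sum_add_distrib, add_comm]

/-- Composition of iterates. -/
theorem apply_substIter_add (σ : A → List A) (m n : ℕ) (w : List A) :
    apply (substIter σ (m + n)) w = apply (substIter σ m) (apply (substIter σ n) w) := by
  induction m with
  | zero =>
    have h0 : ∀ v : List A, apply (substIter σ 0) v = v := by
      intro v
      induction v with
      | nil => rfl
      | cons b v ih => rw [apply_cons, ih]; rfl
    rw [zero_add, h0]
  | succ m ih =>
    have h1 : ∀ (k : ℕ) (v : List A),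
        apply (substIter σ (k + 1)) v = apply σ (apply (substIter σ k) v) := by
      intro k v
      induction v with
      | nil => rfl
      | cons b v ih => rw [apply_cons, ih, apply_cons, apply_append]; rfl
    rw [show m + 1 + n = (m + n) + 1 by omega, h1, ih, h1]

theorem substIter_add (σ : A → List A) (m n : ℕ) (b : A) :
    substIter σ (m + n) b = apply (substIter σ m) (substIter σ n b) := by
  simpa [apply_singleton] using apply_substIter_add σ m n [b]

theorem substIter_one (σ : A → List A) : substIter σ 1 = σ := by
  funext b; exact apply_singleton σ b

theorem apply_substIter_zero (σ : A → List A) (w : List A) : apply (substIter σ 0) w = w := by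
  induction w with
  | nil => rfl
  | cons b v ih => rw [apply_cons, ih]; rfl

theorem substIter_succ' (σ : A → List A) (n : ℕ) (b : A) :
    substIter σ (n + 1) b = apply (substIter σ n) (σ b) := by
  rw [substIter_add, substIter_one]

theorem mSize_substIter_add_le [Fintype A] (σ : A → List A) (m n : ℕ) :
    mSize (substIter σ (m + n)) ≤ mSize (substIter σ m) * mSize (substIter σ n) := by
  refine Finset.sup_le fun b _ => ?_
  rw [substIter_add]
  exact (length_apply_le _ _).trans (Nat.mul_le_mul_left _ (le_mSize _ b))

/-! ### Sequences fixed by a substitution -/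

theorem seqImage_substIter {σ : A → List A} {x : ℕ → A} (h : SeqImage σ x x) (n : ℕ) :
    SeqImage (substIter σ n) x x := by
  induction n with
  | zero =>
    intro s
    rw [apply_substIter_zero]
    exact occursAt_factorAt _ _ _
  | succ n ih =>
    intro s
    have h1 : factorAt x 0 _ = apply (substIter σ n) (factorAt x 0 s) := ih s
    rw [add_comm n 1, apply_substIter_add, substIter_one, ← h1]
    exact h _

/-- The position in `f(x)` at which the image of the letter `x s` starts. -/
def cutPos (f : A → List B) (x : ℕ → A) (s : ℕ) : ℕ := (apply f (factorAt x 0 s)).length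

theorem cutPos_zero (f : A → List B) (x : ℕ → A) : cutPos f x 0 = 0 := rfl

theorem cutPos_add (f : A → List B) (x : ℕ → A) (s t : ℕ) :
    cutPos f x (s + t) = cutPos f x s + (apply f (factorAt x s t)).length := by
  simp [cutPos, factorAt_add, apply_append]

theorem cutPos_add_le [Fintype A] (f : A → List A) (x : ℕ → A) (s t : ℕ) :
    cutPos f x (s + t) ≤ cutPos f x s + mSize f * t := by
  rw [cutPos_add]
  have := length_apply_le f (factorAt x s t)
  rw [length_factorAt] at this
  omega

theorem le_cutPos {f : A → List B} (hf : ∀ b, 1 ≤ (f b).length) (x : ℕ → A) (s : ℕ) :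
    s ≤ cutPos f x s := by
  have := mul_length_le_length_apply hf (factorAt x 0 s)
  rw [length_factorAt] at this
  unfold cutPos; omega

theorem occursAt_apply {f : A → List A} {x : ℕ → A} (h : SeqImage f x x) (s n : ℕ) :
    OccursAt x (apply f (factorAt x s n)) (cutPos f x s) := by
  have h1 := h (s + n)
  rw [factorAt_add, apply_append] at h1
  have h2 := (occursAt_append.mp h1).2
  simpa [cutPos] using h2

theorem occursAt_letter_image {f : A → List A} {x : ℕ → A} (h : SeqImage f x x) (s : ℕ) :
    OccursAt x (f (x s)) (cutPos f x s) := by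
  have := occursAt_apply h s 1
  rwa [factorAt_one, apply_singleton] at this

theorem exists_cutPos_bracket {f : A → List B} (hf : ∀ b, 1 ≤ (f b).length) (x : ℕ → A)
    (i : ℕ) : ∃ s, cutPos f x s ≤ i ∧ i < cutPos f x (s + 1) := by
  classical
  have hex : ∃ s, i < cutPos f x s := ⟨i + 1, le_cutPos hf x (i + 1)⟩
  obtain ⟨s, hs⟩ : ∃ s, Nat.find hex = s + 1 := by
    refine Nat.exists_eq_succ_of_ne_zero fun h => ?_
    have := Nat.find_spec hex
    rw [h, cutPos_zero] at this
    omega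
  refine ⟨s, ?_, ?_⟩
  · exact not_lt.mp (Nat.find_min hex (by omega))
  · rw [← hs]; exact Nat.find_spec hex

/-! ### Primitive substitutions -/

theorem count_substIter [Fintype A] [DecidableEq A] (σ : A → List A) (n : ℕ) (i j : A) :
    (substIter σ n j).count i = (incMatrix σ ^ n) i j := by
  induction n generalizing i with
  | zero =>
    by_cases h : i = j
    · subst h; simp [substIter]
    · simp [substIter, h, Ne.symm h]
  | succ n ih =>
    rw [pow_succ', Matrix.mul_apply]
    change (apply σ (substIter σ n j)).count i = _
    rw [count_apply]
    exact Finset.sum_congr rfl fun l _ => by rw [ih]; rfl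

theorem Primitive.exists_mem [Fintype A] [DecidableEq A] {σ : A → List A}
    (h : Primitive σ) : ∃ k, 0 < k ∧ ∀ i j, i ∈ substIter σ k j := by
  obtain ⟨k, hk, hpos⟩ := h
  refine ⟨k, hk, fun i j => ?_⟩
  rw [← List.count_pos_iff, count_substIter]
  exact hpos i j

theorem Primitive.one_le_length [Fintype A] [DecidableEq A] {σ : A → List A}
    (h : Primitive σ) (b : A) : 1 ≤ (σ b).length := by
  obtain ⟨k, hk, hmem⟩ := h.exists_mem
  obtain ⟨k, rfl⟩ := Nat.exists_eq_succ_of_ne_zero hk.ne'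
  rw [Nat.one_le_iff_ne_zero]
  intro h0
  have h1 := hmem b b
  rw [Nat.succ_eq_add_one, substIter_succ', List.length_eq_zero_iff.mp h0, apply_nil] at h1
  simp at h1

theorem one_le_length_substIter {σ : A → List A} (h : ∀ b, 1 ≤ (σ b).length) (n : ℕ) (b : A) :
    1 ≤ (substIter σ n b).length := by
  induction n with
  | zero => simp [substIter]
  | succ n ih =>
    have := mul_length_le_length_apply h (substIter σ n b)
    change 1 ≤ (apply σ (substIter σ n b)).length
    omega

/-- An increasing orbit of a map on finite sets of letters which eventually exhausts the
alphabet does so after at most `d - 1` steps: it is constant as soon as two consecutive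
terms agree. -/
theorem orbit_eq_univ [Fintype A] [DecidableEq A] (F : Finset A → Finset A)
    (S : ℕ → Finset A) (hS : ∀ n, S (n + 1) = F (S n)) (hmono : ∀ n, S n ⊆ S (n + 1))
    (h0 : (S 0).Nonempty) {m : ℕ} (hm : S m = Finset.univ) :
    S (Fintype.card A - 1) = Finset.univ := by
  have key : ∀ n, S n = Finset.univ ∨ n + 1 ≤ (S n).card := by
    intro n
    induction n with
    | zero => exact Or.inr h0.card_pos
    | succ n ih =>
      rcases ih with ih | ih
      · exact Or.inl (Finset.univ_subset_iff.mp (ih ▸ hmono n))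
      · by_cases he : S n = S (n + 1)
        · have hconst : ∀ t, S (n + t) = S n := by
            intro t
            induction t with
            | zero => rfl
            | succ t iht => rw [← add_assoc, hS, iht, ← hS, ← he]
          have h1 : S m ⊆ S (n + m) :=
            monotone_nat_of_le_succ (f := S) hmono (Nat.le_add_left m n)
          rw [hm, hconst, Finset.univ_subset_iff] at h1
          exact Or.inl (he ▸ h1)
        · right
          have := Finset.card_lt_card (Finset.ssubset_iff_subset_ne.mpr ⟨hmono n, he⟩)
          omega
  rcases key (Fintype.card A - 1) with h | h
  · exact h
  · have hpos : 0 < Fintype.card A := Fintype.card_pos_iff.mpr ⟨h0.choose⟩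
    refine Finset.eq_univ_of_card _ (le_antisymm (Finset.card_le_univ _) ?_)
    omega

/-- All letters occur in `σ^(d-1)(a)`, because `a` occurs in `σ(a)`. -/
theorem mem_substIter_card_sub_one [Fintype A] [DecidableEq A] {σ : A → List A} {a : A}
    (hprim : Primitive σ) (ha : a ∈ σ a) (c : A) :
    c ∈ substIter σ (Fintype.card A - 1) a := by
  obtain ⟨k, -, hk⟩ := hprim.exists_mem
  have := orbit_eq_univ (fun s => s.biUnion fun b => (σ b).toFinset)
    (fun n => (substIter σ n a).toFinset)
    (fun n => by ext c; simp [substIter, mem_apply])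
    (fun n c hc => by
      simp only [List.mem_toFinset] at hc ⊢
      rw [substIter_succ', mem_apply]
      exact ⟨a, ha, hc⟩)
    ⟨a, by simp [substIter]⟩ (m := k) (by ext c; simp [hk])
  have hc := Finset.mem_univ c
  rw [← this] at hc
  simpa using hc

/-- The letter `a` occurs in all the words `σ^(d-1)(b)`, because `a` occurs in `σ(a)`. -/
theorem self_mem_substIter_card_sub_one [Fintype A] [DecidableEq A] {σ : A → List A} {a : A}
    (hprim : Primitive σ) (ha : a ∈ σ a) (b : A) :
    a ∈ substIter σ (Fintype.card A - 1) b := by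
  obtain ⟨k, -, hk⟩ := hprim.exists_mem
  have := orbit_eq_univ (fun s => Finset.univ.filter fun b => ∃ c ∈ σ b, c ∈ s)
    (fun n => Finset.univ.filter fun b => a ∈ substIter σ n b)
    (fun n => by ext c; simp [substIter_succ', mem_apply])
    (fun n c hc => by
      simp only [Finset.mem_filter, Finset.mem_univ, true_and] at hc ⊢
      change a ∈ apply σ (substIter σ n c)
      rw [mem_apply]
      exact ⟨a, hc, ha⟩)
    ⟨a, by simp [substIter]⟩ (m := k) (by ext c; simp [hk])
  have hc := Finset.mem_univ b
  rw [← this] at hc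
  simpa using hc

/-- The lengths `|σⁿ(b)|` tend to infinity for every letter `b`. -/
theorem exists_le_length_substIter [Fintype A] [DecidableEq A] {σ : A → List A} {a : A}
    (hprim : Primitive σ) (hprol : Prolongable σ a) (b : A) (L : ℕ) :
    ∃ n, L ≤ (substIter σ n b).length := by
  obtain ⟨k, -, hk⟩ := hprim.exists_mem
  obtain ⟨n, hn⟩ := (hprol.2.eventually_ge_atTop L).exists
  refine ⟨n + k, hn.trans ?_⟩
  rw [substIter_add]
  exact (infix_apply_of_mem _ (hk a b)).length_le

/-! ### Recurrence in a fixed point and the constant `R_σ` -/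

/-- Every factor of length two of any fixed point occurs in all images `σᵐ(b)`, for some `m`. -/
theorem exists_forall_infix [Fintype A] [DecidableEq A] {σ : A → List A} {a : A}
    (hprim : Primitive σ) (hprol : Prolongable σ a) {y : ℕ → A} (hy : SeqImage σ y y)
    {w : List A} {i : ℕ} (hw : OccursAt y w i) : ∃ m, ∀ b, w <:+: substIter σ m b := by
  obtain ⟨k, -, hk⟩ := hprim.exists_mem
  obtain ⟨n, hn⟩ := exists_le_length_substIter hprim hprol (y 0) (i + w.length)
  refine ⟨n + k, fun b => ?_⟩
  rw [substIter_add]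
  have h0 : IsPrefixSeq y (substIter σ n (y 0)) := by
    have := occursAt_letter_image (seqImage_substIter hy n) 0
    rwa [cutPos_zero] at this
  exact (infix_of_occursAt h0 hw hn).trans (infix_apply_of_mem _ (hk _ b))

/-- If `w` occurs in every `σᵐ(b)`, the gaps between its occurrences in a fixed point are
bounded by twice `|σᵐ|`. -/
theorem gap_le_of_forall_infix [Fintype A] {σ : A → List A}
    (hne : ∀ b, 1 ≤ (σ b).length) {y : ℕ → A} (hy : SeqImage σ y y)
    {w : List A} (hw0 : w.length = 2) {m : ℕ} (hw : ∀ b, w <:+: substIter σ m b) {i j : ℕ}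
    (hij : SuccessiveOccs y w i j) : j - i ≤ mSize (substIter σ m) * 2 := by
  obtain ⟨s, hs1, hs2⟩ := exists_cutPos_bracket (one_le_length_substIter hne m) y i
  have hocc := occursAt_letter_image (seqImage_substIter hy m) (s + 1)
  obtain ⟨q, hq1, hq2, hq3⟩ := occursAt_of_infix (hw _) hocc
  have h2 := cutPos_add_le (substIter σ m) y s 2
  have h3 : cutPos (substIter σ m) y (s + 2) =
      cutPos (substIter σ m) y (s + 1) + (substIter σ m (y (s + 1))).length := by
    rw [show s + 2 = (s + 1) + 1 from rfl, cutPos_add, factorAt_one, apply_singleton]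
  have h4 : j ≤ q := by
    by_contra h
    exact hij.2.2.2 q (by omega) (by omega) hq3
  omega

/-- The set of gaps defining `R_σ` is bounded, so that `R_σ` is a true maximum. -/
theorem bddAbove_gaps [Fintype A] [DecidableEq A] {σ : A → List A} {a : A}
    (hprim : Primitive σ) (hprol : Prolongable σ a) :
    BddAbove {r | ∃ x : ℕ → A, SeqImage σ x x ∧
      ∃ w i j, w.length = 2 ∧ SuccessiveOccs x w i j ∧ r = j - i} := by
  have h : ∀ p : A × A, ∃ B, ∀ y : ℕ → A, SeqImage σ y y → ∀ i j,
      SuccessiveOccs y [p.1, p.2] i j → j - i ≤ B := by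
    intro p
    by_cases hp : ∃ m, ∀ b, [p.1, p.2] <:+: substIter σ m b
    · obtain ⟨m, hm⟩ := hp
      exact ⟨_, fun y hy i j hij =>
        gap_le_of_forall_infix hprim.one_le_length hy rfl hm hij⟩
    · exact ⟨0, fun y hy i j hij =>
        absurd (exists_forall_infix hprim hprol hy hij.2.1) hp⟩
  choose B hB using h
  refine ⟨Finset.univ.sup B, ?_⟩
  rintro r ⟨y, hy, w, i, j, hw, hij, rfl⟩
  obtain ⟨b, c, rfl⟩ := List.length_eq_two.mp hw
  exact (hB (b, c) y hy i j hij).trans (Finset.le_sup (Finset.mem_univ _))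

theorem gap_le_Rconst [Fintype A] [DecidableEq A] {σ : A → List A} {a : A}
    (hprim : Primitive σ) (hprol : Prolongable σ a) {x : ℕ → A} (hfix : SeqImage σ x x)
    {w : List A} (hw : w.length = 2) {i j : ℕ} (hij : SuccessiveOccs x w i j) :
    j - i ≤ Rconst σ :=
  le_csSup (bddAbove_gaps hprim hprol) ⟨x, hfix, w, i, j, hw, hij, rfl⟩

theorem exists_letter_ge [Fintype A] [DecidableEq A] {σ : A → List A}
    (hprim : Primitive σ) {x : ℕ → A} (hfix : SeqImage σ x x) (c : A) (N : ℕ) :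
    ∃ p, N ≤ p ∧ x p = c := by
  obtain ⟨k, -, hk⟩ := hprim.exists_mem
  have hocc := occursAt_letter_image (seqImage_substIter hfix k) N
  have hin : [c] <:+: substIter σ k (x N) := by
    obtain ⟨l, r, h⟩ := List.append_of_mem (hk c (x N))
    exact ⟨l, r, by simp [h]⟩
  obtain ⟨q, hq1, -, hq3⟩ := occursAt_of_infix hin hocc
  have := le_cutPos (one_le_length_substIter hprim.one_le_length k) x N
  exact ⟨q, by omega, occursAt_singleton.mp hq3⟩

/-- Every prefix of the fixed point occurs arbitrarily far. -/
theorem exists_prefix_occ_ge [Fintype A] [DecidableEq A] {σ : A → List A} {a : A}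
    (hprim : Primitive σ) (hprol : Prolongable σ a) {x : ℕ → A} (hfix : SeqImage σ x x)
    (L N : ℕ) : ∃ p, N ≤ p ∧ ∀ k < L, x (p + k) = x k := by
  obtain ⟨n, hn⟩ := exists_le_length_substIter hprim hprol (x 0) L
  obtain ⟨s, hs, hxs⟩ := exists_letter_ge hprim hfix (x 0) N
  have hfn := seqImage_substIter hfix n
  have h0 := occursAt_letter_image hfn 0
  have h1 := occursAt_letter_image hfn s
  rw [hxs] at h1
  rw [cutPos_zero] at h0
  have := le_cutPos (one_le_length_substIter hprim.one_le_length n) x s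
  exact ⟨cutPos (substIter σ n) x s, by omega, fun k hk =>
    (occursAt_iff_of_prefix h0).mp h1 k (by omega)⟩

/-- Every window of length `R_σ` of the fixed point contains every letter. A window that
precedes the first occurrence of the letter is moved to the right by recurrence. -/
theorem exists_letter_in_window [Fintype A] [DecidableEq A] {σ : A → List A} {a : A}
    (hprim : Primitive σ) (hprol : Prolongable σ a) {x : ℕ → A} (hfix : SeqImage σ x x)
    (c : A) (i : ℕ) : ∃ p, i ≤ p ∧ p < i + Rconst σ ∧ x p = c := by
  classical
  obtain ⟨p0, -, hp0⟩ := exists_letter_ge hprim hfix c 0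
  let P : ℕ → Prop := fun q => x q = c ∧ x (q + 1) = x (p0 + 1)
  obtain ⟨p, hp, hpx⟩ := exists_prefix_occ_ge hprim hprol hfix (i + Rconst σ) (p0 + 1)
  have hP0 : P p0 := ⟨hp0, rfl⟩
  have hPocc : ∀ q, OccursAt x [c, x (p0 + 1)] q ↔ P q := by
    intro q
    simp [OccursAt, factorAt, List.range_succ, P]
  have hex : ∃ q, p + i ≤ q ∧ P q := by
    obtain ⟨q, hq, hqx⟩ := exists_prefix_occ_ge hprim hprol hfix (p0 + 2) (p + i)
    exact ⟨q + p0, by omega, (hqx p0 (by omega)).trans hp0, hqx (p0 + 1) (by omega)⟩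
  set j1 := Nat.find hex with hj1
  set j0 := Nat.findGreatest P (p + i - 1) with hj0
  have h0 : P j0 := Nat.findGreatest_spec (P := P) (m := p0) (by omega) hP0
  have h0le : j0 ≤ p + i - 1 := Nat.findGreatest_le _
  have h1 := Nat.find_spec hex
  rw [← hj1] at h1
  have hsucc : SuccessiveOccs x [c, x (p0 + 1)] j0 j1 := by
    refine ⟨by omega, (hPocc _).mpr h0, (hPocc _).mpr h1.2, fun k hk1 hk2 hk => ?_⟩
    have hk' := (hPocc k).mp hk
    by_cases hki : p + i ≤ k
    · exact Nat.find_min hex hk2 ⟨hki, hk'⟩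
    · exact Nat.findGreatest_is_greatest (P := P) (n := p + i - 1) hk1 (by omega) hk'
  have hgap := gap_le_Rconst hprim hprol hfix rfl hsucc
  refine ⟨j1 - p, by omega, by omega, ?_⟩
  rw [← hpx (j1 - p) (by omega), show p + (j1 - p) = j1 by omega]
  exact h1.2.1

theorem one_le_Rconst [Fintype A] [DecidableEq A] {σ : A → List A} {a : A}
    (hprim : Primitive σ) (hprol : Prolongable σ a) {x : ℕ → A} (hfix : SeqImage σ x x) :
    1 ≤ Rconst σ := by
  obtain ⟨p, h1, h2, -⟩ := exists_letter_in_window hprim hprol hfix (x 0) 0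
  omega


/-! ### Comparison of the lengths `|σⁿ(b)|` -/

theorem mSize_le_Qconst [Fintype A] [Nonempty A] (σ : A → List A) :
    (mSize σ : ℝ) ≤ Qconst σ := le_max_right _ _

/-- The comparison built into the definition of `Q_σ`. -/
theorem mSize_substIter_le_of_le [Fintype A] [Nonempty A] {σ : A → List A}
    (hne : ∀ b, 1 ≤ (σ b).length) {n : ℕ}
    (hn : n ≤ (Fintype.card A - 1) * Fintype.card A ^ Fintype.card A + 1) (a : A) :
    (mSize (substIter σ n) : ℝ) ≤ Qconst σ * (substIter σ n a).length := by
  have h1 : (mSize (substIter σ n) : ℝ) / (minSize (substIter σ n) : ℝ) ≤ Qconst σ :=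
    le_trans (Finset.le_sup'
      (fun n => (mSize (substIter σ n) : ℝ) / (minSize (substIter σ n) : ℝ))
      (Finset.mem_range.mpr (by omega))) (le_max_left _ _)
  have h2 : 1 ≤ minSize (substIter σ n) := by
    unfold minSize
    rw [Finset.le_inf'_iff]
    exact fun b _ => one_le_length_substIter hne n b
  have h3 : minSize (substIter σ n) ≤ (substIter σ n a).length :=
    Finset.inf'_le (fun b => (substIter σ n b).length) (Finset.mem_univ a)
  have hone : (1 : ℝ) ≤ minSize (substIter σ n) := by exact_mod_cast h2
  have hcast : (minSize (substIter σ n) : ℝ) ≤ (substIter σ n a).length := by exact_mod_cast h3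
  have hQ : 0 ≤ Qconst σ := (Nat.cast_nonneg _).trans (mSize_le_Qconst σ)
  rw [div_le_iff₀ (by linarith)] at h1
  exact h1.trans (mul_le_mul_of_nonneg_left hcast hQ)

/-- A prefix of length `l * R_σ` contains each letter at least `l` times. -/
theorem le_count_factorAt [Fintype A] [DecidableEq A] {σ : A → List A} {a : A}
    (hprim : Primitive σ) (hprol : Prolongable σ a) {x : ℕ → A} (hfix : SeqImage σ x x)
    (c : A) (l : ℕ) : l ≤ (factorAt x 0 (l * Rconst σ)).count c := by
  induction l with
  | zero => simp
  | succ l ih =>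
    rw [Nat.succ_mul, factorAt_add, List.count_append]
    obtain ⟨p, h1, h2, h3⟩ :=
      exists_letter_in_window hprim hprol hfix c (0 + l * Rconst σ)
    have : c ∈ factorAt x (0 + l * Rconst σ) (Rconst σ) := by
      unfold factorAt
      rw [List.mem_map]
      refine ⟨p - (0 + l * Rconst σ), List.mem_range.mpr (by omega), ?_⟩
      rw [← h3]; congr 1; omega
    have := List.count_pos_iff.mpr this
    omega

theorem isPrefixSeq_substIter {σ : A → List A} {a : A} {x : ℕ → A} (hx0 : x 0 = a)
    (hfix : SeqImage σ x x) (n : ℕ) : IsPrefixSeq x (substIter σ n a) := by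
  have := occursAt_letter_image (seqImage_substIter hfix n) 0
  rwa [cutPos_zero, hx0] at this

theorem three_le_length_substIter_two {σ : A → List A} {a : A}
    (hne : ∀ b, 1 ≤ (σ b).length) (hprol : Prolongable σ a) :
    3 ≤ (substIter σ 2 a).length := by
  obtain ⟨⟨w, hw, ha⟩, -⟩ := hprol
  have h1 : 1 ≤ w.length := List.length_pos_iff.mpr hw
  have h2 := mul_length_le_length_apply hne w
  have h3 : substIter σ 2 a = apply σ (σ a) := by
    rw [substIter_succ', substIter_one]
  rw [h3, ha, apply_cons, ha]
  simp only [List.length_append, List.length_cons]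
  omega

/-- At some bounded level `k`, every letter has frequency at least `3 / (4 R_σ)` in `σᵏ(a)`.
If `σ^(d-1)(a)`, which contains every letter, is not short enough, then `σ^(2d)(a)` is more than
three times longer and the windows of length `R_σ` it is cut into provide the letters. -/
theorem exists_level_frequency [Fintype A] [DecidableEq A] {σ : A → List A} {a : A}
    (hprim : Primitive σ) (hprol : Prolongable σ a) {x : ℕ → A} (hx0 : x 0 = a)
    (hfix : SeqImage σ x x) (hd : 2 ≤ Fintype.card A) :
    ∃ k ≤ (Fintype.card A - 1) * Fintype.card A ^ Fintype.card A + 1,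
      ∀ c, 3 * (substIter σ k a).length ≤
        4 * Rconst σ * (substIter σ k a).count c := by
  have hne := hprim.one_le_length
  set d := Fintype.card A with hdd
  have ha : a ∈ σ a := by
    obtain ⟨⟨w, -, h⟩, -⟩ := hprol
    rw [h]; exact List.mem_cons_self
  have hN : 2 * d ≤ (d - 1) * d ^ d + 1 := by
    have h1 : d ^ 2 ≤ d ^ d := Nat.pow_le_pow_right (by omega) hd
    have h2 : 1 * d ^ d ≤ (d - 1) * d ^ d := Nat.mul_le_mul_right _ (by omega)
    nlinarith
  by_cases hz : 3 * (substIter σ (d - 1) a).length ≤ 4 * Rconst σ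
  · refine ⟨d - 1, by omega, fun c => hz.trans ?_⟩
    have := List.count_pos_iff.mpr (mem_substIter_card_sub_one hprim ha c)
    exact Nat.le_mul_of_pos_right _ this
  · refine ⟨2 * d, hN, fun c => ?_⟩
    have h3 : ∀ b, 3 ≤ (substIter σ (d + 1) b).length := by
      intro b
      rw [show d + 1 = 2 + (d - 1) by omega, substIter_add]
      exact (three_le_length_substIter_two hne hprol).trans
        (infix_apply_of_mem _ (self_mem_substIter_card_sub_one hprim ha b)).length_le
    have h4 := mul_length_le_length_apply h3 (substIter σ (d - 1) a)
    rw [← substIter_add, show d + 1 + (d - 1) = 2 * d by omega] at h4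
    have hpre : factorAt x 0 (substIter σ (2 * d) a).length = substIter σ (2 * d) a :=
      isPrefixSeq_substIter hx0 hfix (2 * d)
    have hR := one_le_Rconst hprim hprol hfix
    generalize hL : (substIter σ (2 * d) a).length = L at *
    rw [← hpre]
    have hdm := Nat.div_add_mod L (Rconst σ)
    have hml := Nat.mod_lt L (show Rconst σ > 0 by omega)
    have hl : 4 ≤ L / Rconst σ := (Nat.le_div_iff_mul_le hR).mpr (by omega)
    have hc := le_count_factorAt hprim hprol hfix c (L / Rconst σ)
    have hcount : L / Rconst σ ≤ (factorAt x 0 L).count c := by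
      refine hc.trans ?_
      conv_rhs => rw [← hdm, mul_comm, factorAt_add, List.count_append]
      exact Nat.le_add_right _ _
    have h5 := Nat.mul_le_mul_left (4 * Rconst σ) hcount
    have h6 := Nat.mul_le_mul_left (Rconst σ) hl
    nlinarith

/-- The word `σⁿ(a)` is, up to the factor `4 Q_σ R_σ / 3`, the longest among the `σⁿ(b)`. -/
theorem mSize_substIter_le [Fintype A] [DecidableEq A] [Nonempty A] {σ : A → List A} {a : A}
    (hprim : Primitive σ) (hprol : Prolongable σ a) {x : ℕ → A} (hx0 : x 0 = a)
    (hfix : SeqImage σ x x) (hd : 2 ≤ Fintype.card A) (n : ℕ) :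
    3 * (mSize (substIter σ n) : ℝ) ≤
      4 * Qconst σ * Rconst σ * (substIter σ n a).length := by
  have hne := hprim.one_le_length
  have hR : (1 : ℝ) ≤ Rconst σ := by exact_mod_cast one_le_Rconst hprim hprol hfix
  have hQ : 0 ≤ Qconst σ := (Nat.cast_nonneg _).trans (mSize_le_Qconst σ)
  obtain ⟨k, hk, hfreq⟩ := exists_level_frequency hprim hprol hx0 hfix hd
  rcases le_total n k with hn | hn
  · have h1 := mSize_substIter_le_of_le hne (hn.trans hk) a
    have h2 : 0 ≤ Qconst σ * (substIter σ n a).length := by positivity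
    nlinarith
  · obtain ⟨m, rfl⟩ := Nat.exists_eq_add_of_le' hn
    obtain ⟨c, -, hc⟩ := Finset.exists_mem_eq_sup (Finset.univ : Finset A)
      Finset.univ_nonempty (fun b => (substIter σ m b).length)
    have hc' : mSize (substIter σ m) = (substIter σ m c).length := hc
    have h1 := count_mul_le_length_apply (substIter σ m) c (substIter σ k a)
    rw [← substIter_add, ← hc'] at h1
    have h2 := mSize_substIter_add_le σ m k
    have h3 := mSize_substIter_le_of_le hne hk a
    have h4 := hfreq c
    have h1' : ((substIter σ k a).count c : ℝ) * mSize (substIter σ m) ≤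
      (substIter σ (m + k) a).length := by exact_mod_cast h1
    have h2' : (mSize (substIter σ (m + k)) : ℝ) ≤
      mSize (substIter σ m) * mSize (substIter σ k) := by exact_mod_cast h2
    have h4' : 3 * ((substIter σ k a).length : ℝ) ≤
      4 * Rconst σ * (substIter σ k a).count c := by exact_mod_cast h4
    have hT : (0 : ℝ) ≤ mSize (substIter σ m) := by positivity
    calc 3 * (mSize (substIter σ (m + k)) : ℝ)
        ≤ 3 * (mSize (substIter σ m) * mSize (substIter σ k)) := by linarith
      _ ≤ 3 * (mSize (substIter σ m) * (Qconst σ * (substIter σ k a).length)) := by gcongr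
      _ = Qconst σ * mSize (substIter σ m) * (3 * (substIter σ k a).length) := by ring
      _ ≤ Qconst σ * mSize (substIter σ m) *
          (4 * Rconst σ * (substIter σ k a).count c) := by gcongr
      _ = 4 * Qconst σ * Rconst σ *
          ((substIter σ k a).count c * mSize (substIter σ m)) := by ring
      _ ≤ _ := by gcongr

/-! ### Return words to long prefixes are long -/

/-- A prefix of length `L` with period `g` forces, when `g + |σ(x_[0,g))| ≤ L`, the period `g`
on the whole fixed point. Applying `σ` gives the period `h = |σ(x_[0,g))|` on a strictly longer
prefix, and the overlap carries the period `g` to that prefix. -/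
theorem periodic_of_prefix {σ : A → List A} {a : A}
    (hne : ∀ b, 1 ≤ (σ b).length) (ha : 2 ≤ (σ a).length) {x : ℕ → A} (hx0 : x 0 = a)
    (hfix : SeqImage σ x x) {g : ℕ} (hg : 1 ≤ g) {L : ℕ}
    (hL : g + cutPos σ x g ≤ L) (hper : ∀ k, k + g < L → x (k + g) = x k) :
    ∀ M, ∀ k, k + g < L + M → x (k + g) = x k := by
  intro M
  induction M with
  | zero => simpa using hper
  | succ M ih =>
    generalize hL2 : L + M = L' at ih
    set h := cutPos σ x g with hh
    have hsplit : cutPos σ x L' = h + (apply σ (factorAt x g (L' - g))).length := by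
      have := cutPos_add σ x g (L' - g)
      rwa [show g + (L' - g) = L' by omega] at this
    have heq : factorAt x g (L' - g) = factorAt x 0 (L' - g) := by
      refine factorAt_congr fun k hk => ?_
      rw [add_comm g k, ih k (by omega), zero_add]
    -- the image of `x_[0, L'-g)` occurs both at `0` and at `h`
    have hocc := occursAt_apply hfix g (L' - g)
    rw [heq] at hocc hsplit
    have hperh : ∀ k, k + h < cutPos σ x L' → x (k + h) = x k := by
      intro k hk
      have := (occursAt_iff_of_prefix (hfix (L' - g))).mp hocc k (by omega)
      rwa [← hh, add_comm h k] at this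
    have hlong : L' + 1 ≤ cutPos σ x L' := by
      have h1 := cutPos_add σ x 1 (L' - 1)
      rw [show 1 + (L' - 1) = L' by omega] at h1
      have h2 : cutPos σ x 1 = (σ a).length := by
        rw [cutPos, factorAt_one, apply_singleton, hx0]
      have h3 := mul_length_le_length_apply hne (factorAt x 1 (L' - 1))
      rw [length_factorAt] at h3
      omega
    have hh1 : g ≤ h := le_cutPos hne x g
    intro k hk
    by_cases hk' : k + g < L'
    · exact ih k hk'
    · have e1 := hperh (k + g - h) (by omega)
      have e2 := hperh (k - h) (by omega)
      have e3 := ih (k - h) (by omega)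
      rw [show k + g - h + h = k + g by omega] at e1
      rw [show k - h + h = k by omega] at e2
      rw [show k - h + g = k + g - h by omega] at e3
      rw [e1, e3, e2]

/-- Two occurrences of a prefix `u` of a non-periodic fixed point are at distance more than
`|u| / (1 + |σ|)`. -/
theorem length_lt_of_occ [Fintype A] {σ : A → List A} {a : A}
    (hne : ∀ b, 1 ≤ (σ b).length) (ha : 2 ≤ (σ a).length) {x : ℕ → A} (hx0 : x 0 = a)
    (hfix : SeqImage σ x x) (hnp : ¬ IsUltimatelyPeriodic x) {u : List A}
    (hu : IsPrefixSeq x u) {i g : ℕ} (hg : 1 ≤ g) (h1 : OccursAt x u i)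
    (h2 : OccursAt x u (i + g)) : u.length < (1 + mSize σ) * g := by
  by_contra hcon
  push Not at hcon
  apply hnp
  refine ⟨0, g, hg, fun n _ => ?_⟩
  have hcut : cutPos σ x g ≤ mSize σ * g := by
    have := cutPos_add_le σ x 0 g
    rwa [zero_add, cutPos_zero, zero_add] at this
  refine periodic_of_prefix hne ha hx0 hfix hg (L := u.length) (by nlinarith) ?_ (n + g + 1) n
    (by omega)
  intro k hk
  rw [← (occursAt_iff_of_prefix hu).mp h1 (k + g) hk,
    ← (occursAt_iff_of_prefix hu).mp h2 k (by omega)]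
  congr 1; omega

/-! ### The sequence of occurrences of a prefix -/

theorem nextOcc_spec [Fintype A] [DecidableEq A] {σ : A → List A} {a : A}
    (hprim : Primitive σ) (hprol : Prolongable σ a) {x : ℕ → A} (hfix : SeqImage σ x x)
    {u : List A} (hu : IsPrefixSeq x u) (i : ℕ) :
    i < nextOcc x u i ∧ OccursAt x u (nextOcc x u i) := by
  have hne : {j | i < j ∧ OccursAt x u j}.Nonempty := by
    obtain ⟨p, hp, h⟩ := exists_prefix_occ_ge hprim hprol hfix u.length (i + 1)
    exact ⟨p, by omega, (occursAt_iff_of_prefix hu).mpr h⟩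
  exact Nat.sInf_mem hne

theorem nextOcc_le {x : ℕ → A} {u : List A} {i j : ℕ} (h : i < j) (hj : OccursAt x u j) :
    nextOcc x u i ≤ j := Nat.sInf_le ⟨h, hj⟩

theorem occursAt_occSeq [Fintype A] [DecidableEq A] {σ : A → List A} {a : A}
    (hprim : Primitive σ) (hprol : Prolongable σ a) {x : ℕ → A} (hfix : SeqImage σ x x)
    {u : List A} (hu : IsPrefixSeq x u) (n : ℕ) : OccursAt x u (occSeq x u n) := by
  cases n with
  | zero => exact hu
  | succ n => exact (nextOcc_spec hprim hprol hfix hu _).2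

theorem occSeq_strictMono [Fintype A] [DecidableEq A] {σ : A → List A} {a : A}
    (hprim : Primitive σ) (hprol : Prolongable σ a) {x : ℕ → A} (hfix : SeqImage σ x x)
    {u : List A} (hu : IsPrefixSeq x u) : StrictMono (occSeq x u) :=
  strictMono_nat_of_lt_succ fun _ => (nextOcc_spec hprim hprol hfix hu _).1

theorem exists_occSeq_eq [Fintype A] [DecidableEq A] {σ : A → List A} {a : A}
    (hprim : Primitive σ) (hprol : Prolongable σ a) {x : ℕ → A} (hfix : SeqImage σ x x)
    {u : List A} (hu : IsPrefixSeq x u) {L : ℕ} (hL : OccursAt x u L) :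
    ∃ m, occSeq x u m = L := by
  classical
  have hmono := occSeq_strictMono hprim hprol hfix hu
  have hex : ∃ m, L ≤ occSeq x u m := ⟨L, hmono.le_apply⟩
  refine ⟨Nat.find hex, le_antisymm ?_ (Nat.find_spec hex)⟩
  rcases h : Nat.find hex with _ | m
  · exact Nat.zero_le L
  · have : occSeq x u m < L := not_le.mp (Nat.find_min hex (by omega))
    exact nextOcc_le this hL

theorem mul_length_le_occSeq_sub [Fintype A] [DecidableEq A] {σ : A → List A} {a : A}
    (hprim : Primitive σ) (hprol : Prolongable σ a) (ha : 2 ≤ (σ a).length) {x : ℕ → A}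
    (hx0 : x 0 = a) (hfix : SeqImage σ x x) (hnp : ¬ IsUltimatelyPeriodic x) {u : List A}
    (hu : IsPrefixSeq x u) (p t : ℕ) :
    (1 + mSize σ) * occSeq x u p + t * u.length ≤ (1 + mSize σ) * occSeq x u (p + t) := by
  induction t with
  | zero => simp
  | succ t ih =>
    have h1 := occSeq_strictMono hprim hprol hfix hu (Nat.lt_succ_self (p + t))
    obtain ⟨g, hg⟩ := Nat.exists_eq_add_of_lt h1
    have h2 := occursAt_occSeq hprim hprol hfix hu (p + t + 1)
    rw [Nat.succ_eq_add_one] at hg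
    rw [hg, add_assoc] at h2
    have h3 := length_lt_of_occ hprim.one_le_length ha hx0 hfix hnp hu (by omega)
      (occursAt_occSeq hprim hprol hfix hu (p + t)) h2
    rw [← add_assoc p t 1, hg]
    nlinarith

/-- Upper bound for the return words to `u`: if `m` is minimal with `|u| ≤ |σᵐ(a)|`, then `u`
occurs at the start of each `σᵐ(a)`, and every window of `R_σ` letters contains an `a`. -/
theorem occSeq_succ_le [Fintype A] [DecidableEq A] [Nonempty A] {σ : A → List A} {a : A}
    (hprim : Primitive σ) (hprol : Prolongable σ a) {x : ℕ → A} (hx0 : x 0 = a)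
    (hfix : SeqImage σ x x) (hd : 2 ≤ Fintype.card A) {u : List A} (hu0 : u ≠ [])
    (hu : IsPrefixSeq x u) (n : ℕ) :
    3 * ((occSeq x u (n + 1) : ℝ) - occSeq x u n) ≤
      4 * mSize σ * Qconst σ * (Rconst σ : ℝ) ^ 2 * u.length := by
  classical
  have hne := hprim.one_le_length
  have hex := exists_le_length_substIter hprim hprol a u.length
  obtain ⟨m, hm, hmin⟩ : ∃ m, u.length ≤ (substIter σ m a).length ∧
      ∀ k < m, (substIter σ k a).length < u.length :=
    ⟨Nat.find hex, Nat.find_spec hex, fun k hk => not_le.mp (Nat.find_min hex hk)⟩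
  have hfm := seqImage_substIter hfix m
  have hnm := one_le_length_substIter hne m
  obtain ⟨s, hs1, hs2⟩ := exists_cutPos_bracket hnm x (occSeq x u n)
  obtain ⟨s', hs3, hs4, hs5⟩ := exists_letter_in_window hprim hprol hfix a (s + 1)
  have hpre := isPrefixSeq_substIter hx0 hfix m
  -- `u` occurs at the start of the image of the letter `a` found at `s'`
  have hocc : OccursAt x u (cutPos (substIter σ m) x s') := by
    have h := occursAt_letter_image hfm s'
    rw [hs5] at h
    exact (occursAt_iff_of_prefix hu).mpr fun k hk =>
      (occursAt_iff_of_prefix hpre).mp h k (by omega)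
  have hmono : cutPos (substIter σ m) x (s + 1) ≤ cutPos (substIter σ m) x s' := by
    have := cutPos_add (substIter σ m) x (s + 1) (s' - (s + 1))
    rw [show s + 1 + (s' - (s + 1)) = s' by omega] at this
    omega
  have hnext : occSeq x u (n + 1) ≤ cutPos (substIter σ m) x s' :=
    nextOcc_le (by omega) hocc
  have hlen : cutPos (substIter σ m) x s' ≤
      cutPos (substIter σ m) x s + mSize (substIter σ m) * Rconst σ := by
    have h1 := cutPos_add_le (substIter σ m) x s (s' - s)
    rw [show s + (s' - s) = s' by omega] at h1
    exact h1.trans (Nat.add_le_add_left (Nat.mul_le_mul_left _ (by omega)) _)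
  have hgap : occSeq x u (n + 1) ≤ occSeq x u n + mSize (substIter σ m) * Rconst σ := by omega
  have hgap' : (occSeq x u (n + 1) : ℝ) ≤
      occSeq x u n + mSize (substIter σ m) * Rconst σ := by exact_mod_cast hgap
  have hR : (1 : ℝ) ≤ Rconst σ := by exact_mod_cast one_le_Rconst hprim hprol hfix
  have hlam : (1 : ℝ) ≤ mSize σ := by exact_mod_cast (hne a).trans (le_mSize σ a)
  have hQ : (1 : ℝ) ≤ Qconst σ := hlam.trans (mSize_le_Qconst σ)
  have hul : (1 : ℝ) ≤ u.length := by exact_mod_cast List.length_pos_iff.mpr hu0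
  have hT : 3 * (mSize (substIter σ m) : ℝ) ≤
      4 * mSize σ * Qconst σ * Rconst σ * u.length := by
    cases m with
    | zero =>
      have h0 : (mSize (substIter σ 0) : ℝ) ≤ 1 := by
        exact_mod_cast Finset.sup_le fun b _ => by simp [substIter]
      have hprod : 1 ≤ mSize σ * Qconst σ * Rconst σ * u.length :=
        one_le_mul_of_one_le_of_one_le (one_le_mul_of_one_le_of_one_le
          (one_le_mul_of_one_le_of_one_le hlam hQ) hR) hul
      linarith
    | succ m =>
      have h1 := mSize_substIter_add_le σ 1 m
      rw [substIter_one, add_comm 1 m] at h1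
      have h1' : (mSize (substIter σ (m + 1)) : ℝ) ≤ mSize σ * mSize (substIter σ m) := by
        exact_mod_cast h1
      have h2 := mSize_substIter_le hprim hprol hx0 hfix hd m
      have h3 : ((substIter σ m a).length : ℝ) ≤ u.length := by
        exact_mod_cast (hmin m (Nat.lt_succ_self m)).le
      calc 3 * (mSize (substIter σ (m + 1)) : ℝ)
          ≤ mSize σ * (3 * mSize (substIter σ m)) := by linarith
        _ ≤ mSize σ * (4 * Qconst σ * Rconst σ * (substIter σ m a).length) := by gcongr
        _ ≤ mSize σ * (4 * Qconst σ * Rconst σ * u.length) := by gcongr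
        _ = _ := by ring
  calc 3 * ((occSeq x u (n + 1) : ℝ) - occSeq x u n)
      ≤ Rconst σ * (3 * mSize (substIter σ m)) := by linarith
    _ ≤ Rconst σ * (4 * mSize σ * Qconst σ * Rconst σ * u.length) := by gcongr
    _ = _ := by ring

/-- The image under `σ` of the prefix of `x` ending at an occurrence of `u` ends at an
occurrence of `u`, because `u` is a prefix of `σ(u)`. -/
theorem occursAt_cutPos {σ : A → List A} (hne : ∀ b, 1 ≤ (σ b).length) {x : ℕ → A}
    (hfix : SeqImage σ x x) {u : List A} (hu : IsPrefixSeq x u) {i : ℕ}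
    (hi : OccursAt x u i) : OccursAt x u (cutPos σ x i) := by
  have h1 := occursAt_apply hfix i u.length
  have h0 := hfix u.length
  have hu' : factorAt x 0 u.length = u := hu
  rw [show factorAt x i u.length = u from hi] at h1
  rw [hu'] at h0
  have hlen := mul_length_le_length_apply hne u
  exact (occursAt_iff_of_prefix hu).mpr fun k hk =>
    (occursAt_iff_of_prefix h0).mp h1 k (by omega)

/-- Let `σ` be a primitive substitution prolongable on `a` with
non-periodic fixed point `x = σ^ω(a)`. Then for every nonempty prefix `u` of `x`,
the return substitution `σ_u` satisfies `|σ_u| ≤ |σ|·K_σ²`. -/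
theorem return_substitution_size_bound {A : Type*}
    [Fintype A] [DecidableEq A] [Nonempty A]
    (σ : A → List A) (a : A) (hprim : Primitive σ) (hprol : Prolongable σ a)
    (x : ℕ → A) (hx0 : x 0 = a) (hfix : SeqImage σ x x)
    (hnp : ¬ IsUltimatelyPeriodic x) :
    ∀ u : List A, u ≠ [] → IsPrefixSeq x u →
      ∀ k ∈ derivedAlphabet x u,
        ((returnSubst σ x u k).length : ℝ) ≤ (mSize σ : ℝ) * Kconst σ ^ 2 := by
  intro u hu0 hu k _
  have hne := hprim.one_le_length
  have ha : 2 ≤ (σ a).length := by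
    obtain ⟨⟨w, hw, h⟩, -⟩ := hprol
    have := List.length_pos_iff.mpr hw
    rw [h, List.length_cons]; omega
  have hd : 2 ≤ Fintype.card A := by
    by_contra hcon
    have : Subsingleton A := Fintype.card_le_one_iff_subsingleton.mp (by omega)
    exact hnp ⟨0, 1, Nat.one_pos, fun n _ => Subsingleton.elim _ _⟩
  have hR : (1 : ℝ) ≤ Rconst σ := by exact_mod_cast one_le_Rconst hprim hprol hfix
  have hlam : (2 : ℝ) ≤ mSize σ := by exact_mod_cast ha.trans (le_mSize σ a)
  have hQ := mSize_le_Qconst σ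
  have hul : (1 : ℝ) ≤ u.length := by exact_mod_cast List.length_pos_iff.mpr hu0
  have hposIdx : ∀ i, OccursAt x u i →
      occSeq x u (posIdx x u (cutPos σ x i)) = cutPos σ x i := fun i hi =>
    Nat.sInf_mem (s := {m | occSeq x u m = cutPos σ x i})
      (exists_occSeq_eq hprim hprol hfix hu (occursAt_cutPos hne hfix hu hi))
  unfold returnSubst
  simp only [List.length_map, List.length_range]
  set n := sInf {n | derivedSeq x u n = k}
  change ((posIdx x u (cutPos σ x (occSeq x u (n + 1))) -
    posIdx x u (cutPos σ x (occSeq x u n)) : ℕ) : ℝ) ≤ _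
  have hp := hposIdx _ (occursAt_occSeq hprim hprol hfix hu n)
  have hq := hposIdx _ (occursAt_occSeq hprim hprol hfix hu (n + 1))
  generalize posIdx x u (cutPos σ x (occSeq x u (n + 1))) = q at hq ⊢
  generalize posIdx x u (cutPos σ x (occSeq x u n)) = p at hp ⊢
  have hgap := occSeq_succ_le hprim hprol hx0 hfix hd hu0 hu n
  have hlt := occSeq_strictMono hprim hprol hfix hu (Nat.lt_succ_self n)
  rw [Nat.succ_eq_add_one] at hlt
  rcases le_total q p with hqp | hpq
  · rw [Nat.sub_eq_zero_of_le hqp, Nat.cast_zero]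
    positivity
  obtain ⟨t, rfl⟩ := Nat.exists_eq_add_of_le hpq
  rw [Nat.add_sub_cancel_left]
  have h1 := mul_length_le_occSeq_sub hprim hprol ha hx0 hfix hnp hu p t
  rw [hp, hq] at h1
  have h2 := cutPos_add_le σ x (occSeq x u n) (occSeq x u (n + 1) - occSeq x u n)
  rw [show occSeq x u n + (occSeq x u (n + 1) - occSeq x u n) = occSeq x u (n + 1) by omega] at h2
  have h1' : (1 + (mSize σ : ℝ)) * cutPos σ x (occSeq x u n) + t * u.length ≤
      (1 + mSize σ) * cutPos σ x (occSeq x u (n + 1)) := by exact_mod_cast h1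
  have h2' : (cutPos σ x (occSeq x u (n + 1)) : ℝ) ≤ cutPos σ x (occSeq x u n) +
      mSize σ * ((occSeq x u (n + 1) : ℝ) - occSeq x u n) := by
    rw [← Nat.cast_sub hlt.le]
    exact_mod_cast h2
  generalize (cutPos σ x (occSeq x u (n + 1)) : ℝ) = c' at h1' h2'
  generalize (cutPos σ x (occSeq x u n) : ℝ) = c at h1' h2'
  generalize (occSeq x u (n + 1) : ℝ) - occSeq x u n = D at hgap h2'
  unfold Kconst
  generalize (mSize σ : ℝ) = l at *
  generalize Qconst σ = Q at *
  generalize (Rconst σ : ℝ) = R at *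
  generalize (u.length : ℝ) = U at *
  -- `4 (1 + l) ≤ 3 l Q` because `2 ≤ l ≤ Q`
  have hlQ : 4 * (1 + l) ≤ 3 * (l * Q) := by nlinarith
  have key : 3 * ((t : ℝ) * U) ≤ 3 * (l * (Q * R * l) ^ 2 * U) := by
    calc 3 * ((t : ℝ) * U) ≤ 3 * ((1 + l) * (c' - c)) := by linarith
      _ ≤ 3 * ((1 + l) * (l * D)) := by
          have : c' - c ≤ l * D := by linarith
          gcongr
      _ = (1 + l) * l * (3 * D) := by ring
      _ ≤ (1 + l) * l * (4 * l * Q * R ^ 2 * U) := by gcongr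
      _ = 4 * (1 + l) * (l ^ 2 * Q * R ^ 2 * U) := by ring
      _ ≤ 3 * (l * Q) * (l ^ 2 * Q * R ^ 2 * U) := by
          have : 0 ≤ Q := by linarith
          gcongr
      _ = _ := by ring
  exact le_of_mul_le_mul_right (by linarith) (show 0 < U by linarith)

end Rauzy
end

section
/- Let x be a uniformly recurrent sequence and let K ≥ 1 be such that for every nonempty factor u of x and every return word w ∈ ℛ_{x,u}, one has |w| ≤ K·|u|. Then for every n ≥ 1, every factor of x of length (K+1)·n contains an occurrence of every factor of x of length n. -/
/-!
A factor `W` of length `(K + 1) * n` recurs at a position `i` strictly after some occurrence of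
`w`. Let `p < i` be the last occurrence of `w` before `i` and `q ≥ i` the next one. The return word
between them gives `q ≤ p + K * n < i + K * n`, so the occurrence of `w` at `q` ends
before `i + (K + 1) * n`, i.e. inside `W`. Moving `W` to the right is essential: the return-word
bound says nothing about how late `w` first occurs.
-/

namespace Rauzy

variable {A B Γ : Type*}

/-- If `w` occurs at `a < i`, then some occurrence at a position `q ≥ i` is the end of a pair of
successive occurrences whose start `p` lies before `i`. -/
lemma exists_successive_around {A : Type*} {x : ℕ → A} {w : List A} {a i b : ℕ}
    (ha : OccursAt x w a) (hai : a < i) (hb : OccursAt x w b) (hib : i ≤ b) :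
    ∃ p q, p < i ∧ i ≤ q ∧ SuccessiveOccs x w p q := by
  classical
  have hex : ∃ j, i ≤ j ∧ OccursAt x w j := ⟨b, hib, hb⟩
  obtain ⟨hiq, hq⟩ := Nat.find_spec hex
  have hp : OccursAt x w (Nat.findGreatest (OccursAt x w) (i - 1)) :=
    Nat.findGreatest_spec (m := a) (by omega) ha
  have hle := Nat.findGreatest_le (P := OccursAt x w) (i - 1)
  refine ⟨Nat.findGreatest (OccursAt x w) (i - 1), Nat.find hex, by omega, hiq, by omega, hp, hq,
    fun k hpk hkq hk => ?_⟩
  by_cases hki : i ≤ k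
  · exact Nat.find_min hex hkq ⟨hki, hk⟩
  · exact Nat.findGreatest_is_greatest hpk (by omega) hk

lemma factorAt_infix {A : Type*} (x : ℕ → A) {i q m n : ℕ}
    (hiq : i ≤ q) (hqn : q + n ≤ i + m) : factorAt x q n <:+: factorAt x i m := by
  obtain ⟨d, rfl⟩ := Nat.exists_eq_add_of_le hiq
  obtain ⟨e, rfl⟩ : ∃ e, m = d + (n + e) := ⟨m - d - n, by omega⟩
  refine ⟨factorAt x i d, factorAt x (i + d + n) e, ?_⟩
  simp [factorAt, List.range_add, Function.comp_def, Nat.add_assoc]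

/-- Let `x` be uniformly recurrent and `K ≥ 1` be such that every
return word `w` to any nonempty factor `u` of `x` satisfies `|w| ≤ K·|u|`.
Then for every `n ≥ 1`, every factor of `x` of length `(K+1)·n` contains an
occurrence of every factor of `x` of length `n`. -/
theorem factors_appear_in_long_factors {A : Type*} (x : ℕ → A)
    (hrec : UniformlyRecurrent x) (K : ℕ) (hK : 1 ≤ K)
    (h : ∀ u : List A, u ≠ [] → IsFactor x u →
      ∀ w ∈ returnWords x u, w.length ≤ K * u.length) :
    ∀ n : ℕ, 1 ≤ n → ∀ W : List A, IsFactor x W → W.length = (K + 1) * n →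
      ∀ w : List A, IsFactor x w → w.length = n → w <:+: W := by
  rintro n hn W hW hWlen w ⟨a, ha⟩ rfl
  obtain ⟨N, hN⟩ := hrec W hW
  obtain ⟨i, hai, -, hi⟩ := hN (a + 1)
  obtain ⟨M, hM⟩ := hrec w ⟨a, ha⟩
  obtain ⟨b, hib, -, hb⟩ := hM i
  obtain ⟨p, q, hpi, hiq, hpq⟩ := exists_successive_around ha hai hb hib
  have hlen := h w (List.length_pos_iff.mp hn) ⟨a, ha⟩ _ ⟨p, q, hpq, rfl⟩
  simp only [factorAt, List.length_map, List.length_range] at hlen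
  have hinf : factorAt x q w.length <:+: factorAt x i W.length :=
    factorAt_infix x hiq (by rw [hWlen, Nat.add_mul]; omega)
  rwa [hpq.2.2.1, hi] at hinf
end Rauzy
end
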